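/- arXiv:1810.08926 — 3 statements merged into one kernel-verified Lean document; each statement's English description precedes it below -/
import Mathlib

section
/- (Theorem 1) Let A : ℝ^k → ℝ^ℓ be a linear map between finite-dimensional real inner product spaces, let w ∈ ℝ^k with ‖w‖ = 1, and let K ⊆ ℝ^k be a bounded set with diameter diam K. Define σ(A) := inf { ‖A v‖ : v ∈ (ker A)^⊥, ‖v‖ = 1 } and assume σ(A) > 0. If μT, μL ∈ K satisfy ‖A(μT − μL)‖ < ε for some ε > 0, then |⟪w, μT − μL⟫| < ε/σ(A) + ρ(A; w) · diam K. -/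
open scoped RealInnerProductSpace

/-- The teaching risk of a worldview `A` with respect to reward weights `w`:
`ρ(A; w) = sup { ⟪w, v⟫ : v ∈ ker A, ‖v‖ ≤ 1 }`. -/
noncomputable def teachingRisk {k : ℕ} {F : Type*} [AddCommGroup F] [Module ℝ F]
    (A : EuclideanSpace ℝ (Fin k) →ₗ[ℝ] F) (w : EuclideanSpace ℝ (Fin k)) : ℝ :=
  sSup {r : ℝ | ∃ v ∈ LinearMap.ker A, ‖v‖ ≤ 1 ∧ r = ⟪w, v⟫}

/-- `σ(A) = inf { ‖A v‖ : v ∈ (ker A)ᗮ, ‖v‖ = 1 }`. -/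
noncomputable def sigmaMin {k l : ℕ}
    (A : EuclideanSpace ℝ (Fin k) →ₗ[ℝ] EuclideanSpace ℝ (Fin l)) : ℝ :=
  sInf {r : ℝ | ∃ v ∈ (LinearMap.ker A)ᗮ, ‖v‖ = 1 ∧ r = ‖A v‖}

/-!
Let `P` be the orthogonal projection onto `ker A` and `x = μT - μL`. Since `P` is self-adjoint,
`⟪w, x⟫ = ⟪P w, x⟫ + ⟪w, x - P x⟫`. The first term is controlled by `‖P w‖`, which is exactly the
teaching risk; the second by `‖x - P x‖`, which is at most `‖A x‖ / σ(A)` because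
`A x = A (x - P x)` and `x - P x` lies in `(ker A)ᗮ`.
-/

section InnerProductSpace

variable {𝕜 E : Type*} [RCLike 𝕜] [NormedAddCommGroup E] [InnerProductSpace 𝕜 E]

section StarProjection

variable (U : Submodule 𝕜 E) [U.HasOrthogonalProjection]

theorem norm_inner_le_norm_starProjection_mul_add (w x : E) :
    ‖inner 𝕜 w x‖ ≤ ‖U.starProjection w‖ * ‖x‖ + ‖w‖ * ‖Uᗮ.starProjection x‖ := by
  have inner_split :
      inner 𝕜 w x = inner 𝕜 (U.starProjection w) x + inner 𝕜 w (Uᗮ.starProjection x) := by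
    rw [U.inner_starProjection_left_eq_right, ← inner_add_right,
      U.starProjection_add_starProjection_orthogonal]
  calc ‖inner 𝕜 w x‖
      ≤ ‖inner 𝕜 (U.starProjection w) x‖ + ‖inner 𝕜 w (Uᗮ.starProjection x)‖ :=
        inner_split ▸ norm_add_le _ _
    _ ≤ ‖U.starProjection w‖ * ‖x‖ + ‖w‖ * ‖Uᗮ.starProjection x‖ :=
        add_le_add (norm_inner_le_norm _ _) (norm_inner_le_norm _ _)

theorem re_inner_le_norm_starProjection_mul_norm (w : E) {v : E} (hv : v ∈ U) :
    RCLike.re (inner 𝕜 w v) ≤ ‖U.starProjection w‖ * ‖v‖ := by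
  have inner_eq : inner 𝕜 (U.starProjection w) v = inner 𝕜 w v := by
    rw [U.inner_starProjection_left_eq_right, U.starProjection_eq_self_iff.mpr hv]
  exact inner_eq ▸ re_inner_le_norm _ _

theorem re_inner_inv_norm_smul_starProjection (w : E) :
    RCLike.re (inner 𝕜 w ((‖U.starProjection w‖⁻¹ : 𝕜) • U.starProjection w)) =
      ‖U.starProjection w‖ := by
  have re_inner_eq : RCLike.re (inner 𝕜 w (U.starProjection w)) = ‖U.starProjection w‖ ^ 2 := by
    rw [← U.inner_starProjection_left_eq_right, U.re_inner_starProjection_eq_normSq]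
    rfl
  rw [inner_smul_right, ← RCLike.ofReal_inv, RCLike.re_ofReal_mul, re_inner_eq, sq,
    ← mul_assoc, inv_mul_mul_self]

theorem isGreatest_re_inner_norm_starProjection (w : E) :
    IsGreatest {r : ℝ | ∃ v ∈ U, ‖v‖ ≤ 1 ∧ r = RCLike.re (inner 𝕜 w v)} ‖U.starProjection w‖ := by
  constructor
  · refine ⟨(‖U.starProjection w‖⁻¹ : 𝕜) • U.starProjection w,
      U.smul_mem _ (U.starProjection_apply_mem w), ?_,
      (re_inner_inv_norm_smul_starProjection U w).symm⟩
    rw [norm_smul, norm_inv, RCLike.norm_ofReal, abs_norm]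
    exact inv_mul_le_one
  · rintro _ ⟨v, hv, hv_norm, rfl⟩
    exact (re_inner_le_norm_starProjection_mul_norm U w hv).trans
      (mul_le_of_le_one_right (norm_nonneg _) hv_norm)

end StarProjection

section ReducedMinModulus

variable {F : Type*} [SeminormedAddCommGroup F] [NormedSpace 𝕜 F]

/-- The reduced minimum modulus `inf { ‖A v‖ : v ∈ (ker A)ᗮ, ‖v‖ = 1 }` of a linear map, which
extends `sigmaMin` to arbitrary inner product spaces. As an infimum of reals it takes the junk
value `0` when `(ker A)ᗮ` is trivial. -/
noncomputable def reducedMinModulus (A : E →ₗ[𝕜] F) : ℝ :=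
  sInf {r : ℝ | ∃ v ∈ (LinearMap.ker A)ᗮ, ‖v‖ = 1 ∧ r = ‖A v‖}

theorem reducedMinModulus_mul_norm_le (A : E →ₗ[𝕜] F) {v : E} (hv : v ∈ (LinearMap.ker A)ᗮ) :
    reducedMinModulus A * ‖v‖ ≤ ‖A v‖ := by
  rcases eq_or_ne v 0 with rfl | hv_ne
  · simp
  have le_normalized : reducedMinModulus A ≤ ‖A ((‖v‖⁻¹ : 𝕜) • v)‖ := by
    refine csInf_le ⟨0, ?_⟩ ⟨_, Submodule.smul_mem _ _ hv, norm_smul_inv_norm hv_ne, rfl⟩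
    rintro _ ⟨u, -, -, rfl⟩
    exact norm_nonneg _
  rwa [map_smul, norm_smul, norm_inv, RCLike.norm_ofReal, abs_norm,
    le_inv_mul_iff₀' (norm_pos_iff.mpr hv_ne)] at le_normalized

variable (A : E →ₗ[𝕜] F) [(LinearMap.ker A).HasOrthogonalProjection]

theorem map_starProjection_orthogonal_ker (x : E) :
    A ((LinearMap.ker A)ᗮ.starProjection x) = A x := by
  rw [Submodule.starProjection_orthogonal_val, map_sub,
    LinearMap.mem_ker.mp (Submodule.starProjection_apply_mem _ x), sub_zero]

theorem norm_starProjection_orthogonal_ker_le (hA : 0 < reducedMinModulus A) (x : E) :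
    ‖(LinearMap.ker A)ᗮ.starProjection x‖ ≤ ‖A x‖ / reducedMinModulus A := by
  rw [le_div_iff₀' hA, ← map_starProjection_orthogonal_ker A x]
  exact reducedMinModulus_mul_norm_le A (Submodule.starProjection_apply_mem _ x)

theorem theorem1_guarantee_bounded_risk_general {w : E} (hw : w ≠ 0) {K : Set E}
    (hK : Bornology.IsBounded K) (hA : 0 < reducedMinModulus A) {μT μL : E} (hμT : μT ∈ K)
    (hμL : μL ∈ K) {ε : ℝ} (h : ‖A (μT - μL)‖ < ε) :
    ‖inner 𝕜 w (μT - μL)‖ < ‖w‖ * (ε / reducedMinModulus A) +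
      ‖(LinearMap.ker A).starProjection w‖ * Metric.diam K := by
  have norm_sub_le_diam : ‖μT - μL‖ ≤ Metric.diam K :=
    dist_eq_norm μT μL ▸ Metric.dist_le_diam_of_mem hK hμT hμL
  have norm_orthogonal_lt : ‖(LinearMap.ker A)ᗮ.starProjection (μT - μL)‖ <
      ε / reducedMinModulus A :=
    (norm_starProjection_orthogonal_ker_le A hA _).trans_lt (div_lt_div_of_pos_right h hA)
  calc ‖inner 𝕜 w (μT - μL)‖
      ≤ ‖(LinearMap.ker A).starProjection w‖ * ‖μT - μL‖ +
          ‖w‖ * ‖(LinearMap.ker A)ᗮ.starProjection (μT - μL)‖ :=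
        norm_inner_le_norm_starProjection_mul_add _ w _
    _ < ‖(LinearMap.ker A).starProjection w‖ * Metric.diam K +
          ‖w‖ * (ε / reducedMinModulus A) :=
        add_lt_add_of_le_of_lt (mul_le_mul_of_nonneg_left norm_sub_le_diam (norm_nonneg _))
          (mul_lt_mul_of_pos_left norm_orthogonal_lt (norm_pos_iff.mpr hw))
    _ = _ := add_comm _ _

end ReducedMinModulus

end InnerProductSpace

theorem teachingRisk_eq_norm_starProjection {k : ℕ} {F : Type*} [AddCommGroup F] [Module ℝ F]
    (A : EuclideanSpace ℝ (Fin k) →ₗ[ℝ] F) (w : EuclideanSpace ℝ (Fin k)) :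
    teachingRisk A w = ‖(LinearMap.ker A).starProjection w‖ :=
  (isGreatest_re_inner_norm_starProjection (LinearMap.ker A) w).csSup_eq

theorem sigmaMin_eq_reducedMinModulus {k l : ℕ}
    (A : EuclideanSpace ℝ (Fin k) →ₗ[ℝ] EuclideanSpace ℝ (Fin l)) :
    sigmaMin A = reducedMinModulus A :=
  rfl

theorem theorem1_guarantee_bounded_risk {k l : ℕ}
    (A : EuclideanSpace ℝ (Fin k) →ₗ[ℝ] EuclideanSpace ℝ (Fin l))
    (w : EuclideanSpace ℝ (Fin k)) (hw : ‖w‖ = 1)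
    (K : Set (EuclideanSpace ℝ (Fin k))) (hK : Bornology.IsBounded K)
    (hσ : 0 < sigmaMin A)
    (μT μL : EuclideanSpace ℝ (Fin k)) (hμT : μT ∈ K) (hμL : μL ∈ K)
    (ε : ℝ) (hε : 0 < ε) (h : ‖A (μT - μL)‖ < ε) :
    |⟪w, μT - μL⟫| < ε / sigmaMin A + teachingRisk A w * Metric.diam K := by
  have hw_ne : w ≠ 0 := norm_ne_zero_iff.mp (hw ▸ one_ne_zero)
  simpa only [hw, one_mul, Real.norm_eq_abs, teachingRisk_eq_norm_starProjection,
    sigmaMin_eq_reducedMinModulus] using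
    theorem1_guarantee_bounded_risk_general A hw_ne hK hσ hμT hμL h
end

section
/- (Proposition 1, precise form) Let A : ℝ^k → ℝ^ℓ be a linear map between finite-dimensional real inner product spaces, let w ∈ ℝ^k with ‖w‖ = 1, let K ⊆ ℝ^k, and let μ* ∈ K be a maximizer of μ ↦ ⟪w, μ⟫ over K. Assume the supporting normal of K at μ* is unique, i.e. for every unit vector u ∈ ℝ^k, if ⟪u, μ⟫ ≤ ⟪u, μ*⟫ for all μ ∈ K then u = w. If ρ(A; w) > 0, then for every wL ∈ ℝ^ℓ with A* wL ≠ 0 there exists μ ∈ K with ⟪wL, A μ⟫ > ⟪wL, A μ*⟫; that is, μ* is suboptimal for every nondegenerate reward function linear in the learner's observed features. -/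
open scoped RealInnerProductSpace

/-!
A learner who sees only `A μ` and uses weights `wL` has reward vector `A* wL`, which is orthogonal
to `ker A`. Positive teaching risk says that `w` is not orthogonal to `ker A`, so `A* wL` and `w`
are not parallel. If `μstar` were optimal for the learner, then the normalization of `A* wL` would
be a unit supporting normal at `μstar` other than `w`.
-/

theorem notMem_orthogonal_ker_of_teachingRisk_pos {k : ℕ} {F : Type*} [AddCommGroup F] [Module ℝ F]
    {A : EuclideanSpace ℝ (Fin k) →ₗ[ℝ] F} {w : EuclideanSpace ℝ (Fin k)}
    (hρ : 0 < teachingRisk A w) : w ∉ (LinearMap.ker A)ᗮ := by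
  intro hw
  refine hρ.not_ge (Real.sSup_nonpos ?_)
  rintro _ ⟨v, hv, -, rfl⟩
  exact (Submodule.inner_left_of_mem_orthogonal hv hw).le

section SupportingNormal

variable {E : Type*} [NormedAddCommGroup E] [InnerProductSpace ℝ E]
  {K : Set E} {w y μstar : E}

theorem inv_norm_smul_eq_of_unique_supporting_normal
    (hunique : ∀ u : E, ‖u‖ = 1 → (∀ μ ∈ K, ⟪u, μ⟫ ≤ ⟪u, μstar⟫) → u = w)
    (hy : y ≠ 0) (hmax : ∀ μ ∈ K, ⟪y, μ⟫ ≤ ⟪y, μstar⟫) : ‖y‖⁻¹ • y = w := by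
  refine hunique _ (norm_smul_inv_norm (𝕜 := ℝ) hy) fun μ hμ ↦ ?_
  simp only [real_inner_smul_left]
  gcongr
  exact hmax μ hμ

theorem exists_inner_lt_of_unique_supporting_normal_notMem {S : Submodule ℝ E}
    (hunique : ∀ u : E, ‖u‖ = 1 → (∀ μ ∈ K, ⟪u, μ⟫ ≤ ⟪u, μstar⟫) → u = w)
    (hw : w ∉ S) (hyS : y ∈ S) (hy : y ≠ 0) : ∃ μ ∈ K, ⟪y, μstar⟫ < ⟪y, μ⟫ := by
  by_contra! hmax
  have hyw : ‖y‖⁻¹ • y = w := inv_norm_smul_eq_of_unique_supporting_normal hunique hy hmax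
  exact hw (hyw ▸ S.smul_mem _ hyS)

end SupportingNormal

theorem adjoint_apply_mem_orthogonal_ker {E F : Type*}
    [NormedAddCommGroup E] [InnerProductSpace ℝ E] [CompleteSpace E]
    [NormedAddCommGroup F] [InnerProductSpace ℝ F] [CompleteSpace F]
    (A : E →L[ℝ] F) (u : F) : A.adjoint u ∈ A.kerᗮ := by
  rw [A.orthogonal_ker]
  exact Submodule.le_topologicalClosure _ (LinearMap.mem_range_self _ u)

theorem prop1_optimal_policy_suboptimal_for_learner_general {E F : Type*}
    [NormedAddCommGroup E] [InnerProductSpace ℝ E] [CompleteSpace E]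
    [NormedAddCommGroup F] [InnerProductSpace ℝ F] [CompleteSpace F]
    (A : E →L[ℝ] F) {K : Set E} {w μstar : E}
    (hunique : ∀ u : E, ‖u‖ = 1 → (∀ μ ∈ K, ⟪u, μ⟫ ≤ ⟪u, μstar⟫) → u = w)
    (hw : w ∉ A.kerᗮ) {wL : F} (hwL : A.adjoint wL ≠ 0) :
    ∃ μ ∈ K, ⟪wL, A μstar⟫ < ⟪wL, A μ⟫ := by
  simpa only [A.adjoint_inner_left] using
    exists_inner_lt_of_unique_supporting_normal_notMem hunique hw
      (adjoint_apply_mem_orthogonal_ker A wL) hwL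

theorem prop1_optimal_policy_suboptimal_for_learner {k l : ℕ}
    (A : EuclideanSpace ℝ (Fin k) →ₗ[ℝ] EuclideanSpace ℝ (Fin l))
    (w : EuclideanSpace ℝ (Fin k)) (hw : ‖w‖ = 1)
    (K : Set (EuclideanSpace ℝ (Fin k)))
    (μstar : EuclideanSpace ℝ (Fin k)) (hμstar : μstar ∈ K)
    (hmax : ∀ μ ∈ K, ⟪w, μ⟫ ≤ ⟪w, μstar⟫)
    (hunique : ∀ u : EuclideanSpace ℝ (Fin k), ‖u‖ = 1 →
      (∀ μ ∈ K, ⟪u, μ⟫ ≤ ⟪u, μstar⟫) → u = w)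
    (hρ : 0 < teachingRisk A w) :
    ∀ wL : EuclideanSpace ℝ (Fin l), LinearMap.adjoint A wL ≠ 0 →
      ∃ μ ∈ K, ⟪wL, A μstar⟫ < ⟪wL, A μ⟫ :=
  fun _ ↦ prop1_optimal_policy_suboptimal_for_learner_general A.toContinuousLinearMap hunique
    (notMem_orthogonal_ker_of_teachingRisk_pos hρ)
end

section
/- (One-sided learner guarantee) Let A : ℝ^k → ℝ^ℓ be a linear map between finite-dimensional real inner product spaces, let w ∈ ℝ^k with ‖w‖ = 1, and let K ⊆ ℝ^k be a bounded set. Define σ(A) := inf { ‖A v‖ : v ∈ (ker A)^⊥, ‖v‖ = 1 } and assume σ(A) > 0. Suppose μ* ∈ K maximizes μ ↦ ⟪w, μ⟫ over K (the teacher's policy is optimal) and μL ∈ K satisfies ‖A(μ* − μL)‖ < ε. Then ⟪w, μ*⟫ − ⟪w, μL⟫ < ε/σ(A) + ρ(A; w) · diam K, and in particular ⟪w, μL⟫ > (sup over μ ∈ K of ⟪w, μ⟫) − ε/σ(A) − ρ(A; w) · diam K. -/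
open scoped RealInnerProductSpace

/-!
Split `x = p + q` with `p ∈ ker A` and `q ∈ (ker A)ᗮ`. The teaching risk bounds `⟪w, p⟫` in terms
of `‖p‖ ≤ ‖x‖`, while `A x = A q` controls `‖q‖`, and hence `⟪w, q⟫`, through `σ(A)`. The guarantee
is this estimate for `x = μstar - μL`.
-/

section MinModulus

variable {E F : Type*} [NormedAddCommGroup E] [InnerProductSpace ℝ E]

/-- The support function, at `w`, of the closed unit ball of the subspace `S`. For `S = ker A` it is
the teaching risk `ρ(A; w)`. -/
noncomputable def unitBallSupport (S : Submodule ℝ E) (w : E) : ℝ :=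
  sSup {r : ℝ | ∃ v ∈ S, ‖v‖ ≤ 1 ∧ r = ⟪w, v⟫}

/-- The minimum modulus of `A` on the subspace `S`: the largest `c` with `c * ‖v‖ ≤ ‖A v‖` for
all `v ∈ S`. For `S = (ker A)ᗮ` it is `σ(A)`. Its value is the junk `sInf ∅ = 0` when `S` is
trivial. -/
noncomputable def minModulusOn [SeminormedAddCommGroup F] [NormedSpace ℝ F] (A : E →ₗ[ℝ] F)
    (S : Submodule ℝ E) : ℝ :=
  sInf {r : ℝ | ∃ v ∈ S, ‖v‖ = 1 ∧ r = ‖A v‖}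

theorem inner_le_unitBallSupport {S : Submodule ℝ E} (w : E) {v : E} (hv : v ∈ S)
    (hv_norm : ‖v‖ ≤ 1) : ⟪w, v⟫ ≤ unitBallSupport S w := by
  refine le_csSup ⟨‖w‖, ?_⟩ ⟨v, hv, hv_norm, rfl⟩
  rintro _ ⟨u, -, hu_norm, rfl⟩
  exact (real_inner_le_norm w u).trans (mul_le_of_le_one_right (norm_nonneg w) hu_norm)

theorem unitBallSupport_nonneg (S : Submodule ℝ E) (w : E) : 0 ≤ unitBallSupport S w := by
  simpa using inner_le_unitBallSupport w S.zero_mem (by simp)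

theorem inner_le_unitBallSupport_mul_norm {S : Submodule ℝ E} (w : E) {v : E} (hv : v ∈ S) :
    ⟪w, v⟫ ≤ unitBallSupport S w * ‖v‖ := by
  obtain rfl | hv_ne := eq_or_ne v 0
  · simp
  have h_unit : ⟪w, ‖v‖⁻¹ • v⟫ ≤ unitBallSupport S w :=
    inner_le_unitBallSupport w (S.smul_mem _ hv) (norm_smul_inv_norm (𝕜 := ℝ) hv_ne).le
  rwa [real_inner_smul_right, inv_mul_le_iff₀' (norm_pos_iff.mpr hv_ne)] at h_unit

theorem map_starProjection_ker_orthogonal [AddCommGroup F] [Module ℝ F] (A : E →ₗ[ℝ] F)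
    [(LinearMap.ker A).HasOrthogonalProjection] (x : E) :
    A ((LinearMap.ker A)ᗮ.starProjection x) = A x := by
  have h_ker : A ((LinearMap.ker A).starProjection x) = 0 :=
    (LinearMap.ker A).starProjection_apply_mem x
  rw [Submodule.starProjection_orthogonal_val, map_sub, h_ker, sub_zero]

variable [SeminormedAddCommGroup F] [NormedSpace ℝ F] (A : E →ₗ[ℝ] F)

theorem minModulusOn_mul_norm_le {S : Submodule ℝ E} {v : E} (hv : v ∈ S) :
    minModulusOn A S * ‖v‖ ≤ ‖A v‖ := by
  obtain rfl | hv_ne := eq_or_ne v 0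
  · simp
  have h_unit : minModulusOn A S ≤ ‖A (‖v‖⁻¹ • v)‖ := by
    refine csInf_le ⟨0, ?_⟩ ⟨_, S.smul_mem _ hv, norm_smul_inv_norm (𝕜 := ℝ) hv_ne, rfl⟩
    rintro _ ⟨u, -, -, rfl⟩
    exact norm_nonneg _
  rwa [map_smul, norm_smul, norm_inv, norm_norm,
    le_inv_mul_iff₀' (norm_pos_iff.mpr hv_ne)] at h_unit

variable [(LinearMap.ker A).HasOrthogonalProjection]

theorem norm_starProjection_ker_orthogonal_le_div
    (hσ : 0 < minModulusOn A (LinearMap.ker A)ᗮ) (x : E) :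
    ‖(LinearMap.ker A)ᗮ.starProjection x‖ ≤ ‖A x‖ / minModulusOn A (LinearMap.ker A)ᗮ := by
  rw [le_div_iff₀' hσ, ← map_starProjection_ker_orthogonal A x]
  exact minModulusOn_mul_norm_le A ((LinearMap.ker A)ᗮ.starProjection_apply_mem x)

theorem inner_le_norm_map_div_minModulusOn_add_unitBallSupport_mul_norm
    (hσ : 0 < minModulusOn A (LinearMap.ker A)ᗮ) (w x : E) :
    ⟪w, x⟫ ≤ ‖w‖ * (‖A x‖ / minModulusOn A (LinearMap.ker A)ᗮ) +
      unitBallSupport (LinearMap.ker A) w * ‖x‖ := by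
  set p := (LinearMap.ker A).starProjection x
  set q := (LinearMap.ker A)ᗮ.starProjection x
  have hp : ⟪w, p⟫ ≤ unitBallSupport (LinearMap.ker A) w * ‖x‖ :=
    calc ⟪w, p⟫ ≤ unitBallSupport (LinearMap.ker A) w * ‖p‖ :=
          inner_le_unitBallSupport_mul_norm w ((LinearMap.ker A).starProjection_apply_mem x)
      _ ≤ unitBallSupport (LinearMap.ker A) w * ‖x‖ :=
          mul_le_mul_of_nonneg_left ((LinearMap.ker A).norm_starProjection_apply_le x)
            (unitBallSupport_nonneg _ w)
  have hq : ⟪w, q⟫ ≤ ‖w‖ * (‖A x‖ / minModulusOn A (LinearMap.ker A)ᗮ) :=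
    (real_inner_le_norm w q).trans <| mul_le_mul_of_nonneg_left
      (norm_starProjection_ker_orthogonal_le_div A hσ x) (norm_nonneg w)
  calc ⟪w, x⟫ = ⟪w, q⟫ + ⟪w, p⟫ := by
        rw [← inner_add_right, add_comm,
          Submodule.starProjection_add_starProjection_orthogonal]
    _ ≤ _ := add_le_add hq hp

theorem inner_sub_inner_lt_div_minModulusOn_add_unitBallSupport_mul_diam
    (hσ : 0 < minModulusOn A (LinearMap.ker A)ᗮ) {w : E} (hw : ‖w‖ ≤ 1) {K : Set E}
    (hK : Bornology.IsBounded K) {x y : E} (hx : x ∈ K) (hy : y ∈ K) {ε : ℝ}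
    (h : ‖A (x - y)‖ < ε) :
    ⟪w, x⟫ - ⟪w, y⟫ < ε / minModulusOn A (LinearMap.ker A)ᗮ +
      unitBallSupport (LinearMap.ker A) w * Metric.diam K := by
  have h_diam : ‖x - y‖ ≤ Metric.diam K :=
    dist_eq_norm x y ▸ Metric.dist_le_diam_of_mem hK hx hy
  calc ⟪w, x⟫ - ⟪w, y⟫ = ⟪w, x - y⟫ := (inner_sub_right w x y).symm
    _ ≤ ‖w‖ * (‖A (x - y)‖ / minModulusOn A (LinearMap.ker A)ᗮ) +
          unitBallSupport (LinearMap.ker A) w * ‖x - y‖ :=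
        inner_le_norm_map_div_minModulusOn_add_unitBallSupport_mul_norm A hσ w (x - y)
    _ ≤ ‖A (x - y)‖ / minModulusOn A (LinearMap.ker A)ᗮ +
          unitBallSupport (LinearMap.ker A) w * Metric.diam K :=
        add_le_add (mul_le_of_le_one_left (by positivity) hw)
          (mul_le_mul_of_nonneg_left h_diam (unitBallSupport_nonneg _ w))
    _ < ε / minModulusOn A (LinearMap.ker A)ᗮ +
          unitBallSupport (LinearMap.ker A) w * Metric.diam K := by gcongr

theorem one_sided_learner_guarantee_general
    (hσ : 0 < minModulusOn A (LinearMap.ker A)ᗮ) {w : E} (hw : ‖w‖ ≤ 1) {K : Set E}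
    (hK : Bornology.IsBounded K) {μstar μL : E} (hμstar : μstar ∈ K) (hμL : μL ∈ K)
    (hmax : ∀ μ ∈ K, ⟪w, μ⟫ ≤ ⟪w, μstar⟫) {ε : ℝ} (h : ‖A (μstar - μL)‖ < ε) :
    ⟪w, μstar⟫ - ⟪w, μL⟫ < ε / minModulusOn A (LinearMap.ker A)ᗮ +
        unitBallSupport (LinearMap.ker A) w * Metric.diam K ∧
      sSup ((fun μ => ⟪w, μ⟫) '' K) - ε / minModulusOn A (LinearMap.ker A)ᗮ -
        unitBallSupport (LinearMap.ker A) w * Metric.diam K < ⟪w, μL⟫ := by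
  have h_gap := inner_sub_inner_lt_div_minModulusOn_add_unitBallSupport_mul_diam
    A hσ hw hK hμstar hμL h
  have h_sup : sSup ((fun μ => ⟪w, μ⟫) '' K) = ⟪w, μstar⟫ :=
    IsGreatest.csSup_eq ⟨Set.mem_image_of_mem _ hμstar, Set.forall_mem_image.mpr hmax⟩
  exact ⟨h_gap, by linarith⟩

end MinModulus

theorem one_sided_learner_guarantee {k l : ℕ}
    (A : EuclideanSpace ℝ (Fin k) →ₗ[ℝ] EuclideanSpace ℝ (Fin l))
    (w : EuclideanSpace ℝ (Fin k)) (hw : ‖w‖ = 1)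
    (K : Set (EuclideanSpace ℝ (Fin k))) (hK : Bornology.IsBounded K)
    (hσ : 0 < sigmaMin A)
    (μstar μL : EuclideanSpace ℝ (Fin k)) (hμstar : μstar ∈ K) (hμL : μL ∈ K)
    (hmax : ∀ μ ∈ K, ⟪w, μ⟫ ≤ ⟪w, μstar⟫)
    (ε : ℝ) (h : ‖A (μstar - μL)‖ < ε) :
    ⟪w, μstar⟫ - ⟪w, μL⟫ < ε / sigmaMin A + teachingRisk A w * Metric.diam K ∧
    sSup ((fun μ => ⟪w, μ⟫) '' K) - ε / sigmaMin A - teachingRisk A w * Metric.diam K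
      < ⟪w, μL⟫ := by
  exact one_sided_learner_guarantee_general A hσ hw.le hK hμstar hμL hmax h
end
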